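/- Let k be a field, d, α, β, γ ≥ 1, and R = k[X,Y,Z]/(X^d - F(Y,Z)) graded by deg X = α, deg Y = β, deg Z = γ, with F homogeneous of degree dα. Let a ≥ 1, a = dq + r with 0 ≤ r ≤ d-1, fix b, c ≥ 1, and write S(l) = Syz_R(X^l, Y^b, Z^c). Then the Hilbert series satisfy (1 - t^{αd})·H_{S(a)}(t) = (t^{αr} - t^{αd})·H_{S(a-r)}(t) + (1 - t^{αr})·H_{S(a+d-r)}(t). -/

import Mathlib

set_option maxHeartbeats 1000000
set_option synthInstance.maxHeartbeats 1000000

/-- The linear map `(a₁,…,aₙ) ↦ Σ aᵢ·gᵢ`; the syzygy module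
`Syz_R(g₁,…,gₙ)` is its kernel. -/
noncomputable def syzMap {R : Type*} [CommRing R] {n : ℕ} (g : Fin n → R) :
    (Fin n → R) →ₗ[R] R :=
  ∑ i, (LinearMap.proj i : (Fin n → R) →ₗ[R] R).smulRight (g i)

/-!
Let `R` be an extension of a graded ring `A` with basis `1, x, …, x ^ (d - 1)`, where
`x ^ d = f ∈ A` and `x` is homogeneous of degree `α`. Multiplication by `x ^ (d * q + r)`
permutes the summands `A x ^ j` cyclically, up to the factor `f ^ (q + 1)` on those that land in
`j < r` and `f ^ q` on the others. Hence the syzygies over `R` of `x ^ (d * q + r)` and elements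
`g` of `A` split into copies, shifted by `j α`, of the syzygies over `A` of `(f ^ (q + 1), g)` for
`j < r` and of `(f ^ q, g)` for `r ≤ j < d`. With `Tₑ` the Hilbert series of the syzygies of
`(f ^ e, g)` over `A`,
`(1 - t ^ α) H_{S(d * q + r)} = (1 - t ^ (r α)) T_{q + 1} + (t ^ (r α) - t ^ (d α)) T_q`,
and the recursion follows by comparing this with the cases `d * q` and `d * (q + 1)`. For the
hypersurface `X ^ d = F(Y, Z)`, take `A = k[Y, Z]`.
-/

open DirectSum MvPolynomial

section GradedSyzygies

variable {k R ι : Type*} [CommRing k] [CommRing R] [Algebra k R] [AddCommGroup ι] {n : ℕ}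

theorem syzMap_apply (g v : Fin n → R) : syzMap g v = ∑ i, v i * g i := by
  simp [syzMap]

/-- The degree-`m` piece of the syzygy module of `g` with respect to the grading `𝒜`, where the
`i`-th generator of the free module is placed in degree `δ i`, the intended degree of `g i`. -/
noncomputable def gradedSyz (𝒜 : ι → Submodule k R) (g : Fin n → R) (δ : Fin n → ι) (m : ι) :
    Submodule k (Fin n → R) :=
  (LinearMap.ker (syzMap g)).restrictScalars k ⊓ Submodule.pi Set.univ fun i => 𝒜 (m - δ i)

theorem mem_gradedSyz {𝒜 : ι → Submodule k R} {g v : Fin n → R} {δ : Fin n → ι} {m : ι} :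
    v ∈ gradedSyz 𝒜 g δ m ↔ ∑ i, v i * g i = 0 ∧ ∀ i, v i ∈ 𝒜 (m - δ i) := by
  simp [gradedSyz, syzMap_apply, Submodule.mem_pi]

theorem gradedSyz_fin_three (𝒜 : ι → Submodule k R) (g : Fin 3 → R) (δ₀ δ₁ δ₂ m : ι) :
    gradedSyz 𝒜 g ![δ₀, δ₁, δ₂] m =
      (LinearMap.ker (syzMap g)).restrictScalars k ⊓
        Submodule.pi Set.univ ![𝒜 (m - δ₀), 𝒜 (m - δ₁), 𝒜 (m - δ₂)] := by
  ext v
  simp [gradedSyz, Submodule.mem_pi, Fin.forall_fin_succ]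

end GradedSyzygies

/-- The submodule `Submodule.pi Set.univ T` of a product of modules as a product of the modules
`T j`, which gives access to its dimension. -/
def submodulePiEquiv {k κ : Type*} [Semiring k] {M : κ → Type*} [∀ j, AddCommMonoid (M j)]
    [∀ j, Module k (M j)] (T : ∀ j, Submodule k (M j)) :
    Submodule.pi Set.univ T ≃ₗ[k] ∀ j, T j where
  toFun v j := ⟨v.1 j, v.2 j trivial⟩
  invFun t := ⟨fun j => t j, fun j _ => (t j).2⟩
  map_add' _ _ := rfl
  map_smul' _ _ := rfl

instance gradedSyz_finite {k R ι : Type*} [Field k] [CommRing R] [Algebra k R] [AddCommGroup ι]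
    {n : ℕ} (𝒜 : ι → Submodule k R) [∀ m, Module.Finite k (𝒜 m)] (g : Fin n → R)
    (δ : Fin n → ι) (m : ι) : Module.Finite k (gradedSyz 𝒜 g δ m) :=
  have : Module.Finite k (Submodule.pi Set.univ fun i => 𝒜 (m - δ i)) :=
    Module.Finite.equiv (submodulePiEquiv _).symm
  Submodule.finiteDimensional_of_le inf_le_right

section HomogeneousBasis

variable {k A R ι κ : Type*} [CommRing k] [CommRing A] [CommRing R] [Algebra k A] [Algebra k R]
  [Algebra A R] [AddCommGroup ι] [DecidableEq ι] [Finite κ]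
  {ℬ : ι → Submodule k A} [GradedAlgebra ℬ] {𝒜 : ι → Submodule k R} [GradedAlgebra 𝒜]

theorem coe_decompose_algebraMap (hℬ : ∀ m, ∀ a ∈ ℬ m, algebraMap A R a ∈ 𝒜 m) (a : A) (m : ι) :
    (decompose 𝒜 (algebraMap A R a) m : R) = algebraMap A R (decompose ℬ a m) :=
  let φ : ℬ →+*ᵍ 𝒜 := ⟨algebraMap A R, fun {m a} => hℬ m a⟩
  (map_directSumDecompose ℬ 𝒜 φ).symm

theorem repr_decompose_of_homogeneous_basis
    (hℬ : ∀ m, ∀ a ∈ ℬ m, algebraMap A R a ∈ 𝒜 m) (b : Module.Basis κ A R) {ε : κ → ι}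
    (hb : ∀ j, b j ∈ 𝒜 (ε j)) (v : R) (m : ι) (j : κ) :
    b.repr (decompose 𝒜 v m) j = decompose ℬ (b.repr v j) (m - ε j) := by
  cases nonempty_fintype κ
  have component (a : A) (j : κ) :
      (decompose 𝒜 (a • b j) m : R) = (decompose ℬ a (m - ε j) : A) • b j := by
    conv_lhs => rw [← sub_add_cancel m (ε j), Algebra.smul_def]
    rw [coe_decompose_mul_add_of_right_mem 𝒜 (hb j), coe_decompose_algebraMap hℬ, Algebra.smul_def]
  have expansion :
      (decompose 𝒜 v m : R) = ∑ j, (decompose ℬ (b.repr v j) (m - ε j) : A) • b j := by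
    conv_lhs => rw [← b.sum_repr v]
    rw [decompose_sum, DFinsupp.finsetSum_apply, AddSubmonoidClass.coe_finsetSum]
    exact Finset.sum_congr rfl fun j _ => component _ j
  rw [expansion, b.repr_sum_self]

theorem mem_grading_iff_repr_mem
    (hℬ : ∀ m, ∀ a ∈ ℬ m, algebraMap A R a ∈ 𝒜 m) (b : Module.Basis κ A R) {ε : κ → ι}
    (hb : ∀ j, b j ∈ 𝒜 (ε j)) {v : R} {m : ι} :
    v ∈ 𝒜 m ↔ ∀ j, b.repr v j ∈ ℬ (m - ε j) := by
  cases nonempty_fintype κ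
  refine ⟨fun hv j => ?_, fun hv => ?_⟩
  · rw [← decompose_of_mem_same 𝒜 hv, repr_decompose_of_homogeneous_basis hℬ b hb]
    exact SetLike.coe_mem _
  · rw [← b.sum_repr v]
    refine sum_mem fun j _ => ?_
    rw [Algebra.smul_def, ← sub_add_cancel m (ε j)]
    exact SetLike.mul_mem_graded (hℬ _ _ (hv j)) (hb j)

end HomogeneousBasis

section Decomposition

variable {k A R ι κ : Type*} [CommRing A] [CommRing R] [Algebra A R] [Fintype κ] {n : ℕ}

/-- The coordinates of a tuple in `Rⁿ`, where the `i`-th entry is expanded in the `A`-basis `b i`;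
they are grouped into one tuple in `Aⁿ` for each index `j` of the bases. -/
noncomputable def coordEquiv (b : Fin n → Module.Basis κ A R) :
    (Fin n → R) ≃ₗ[A] (κ → Fin n → A) where
  toFun v j i := (b i).repr (v i) j
  invFun t i := ∑ j, t j i • b i j
  map_add' _ _ := by ext; simp
  map_smul' _ _ := by ext; simp
  left_inv v := by ext i; exact (b i).sum_repr (v i)
  right_inv t := by ext j i; simp only [(b i).repr_sum_self]

theorem sum_mul_eq_sum_coordEquiv_smul (b : Fin n → Module.Basis κ A R) {e : κ → R} {g : Fin n → R}
    {c : κ → Fin n → A} (hmul : ∀ i j, b i j * g i = c j i • e j) (v : Fin n → R) :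
    ∑ i, v i * g i = ∑ j, (∑ i, coordEquiv b v j i * c j i) • e j := by
  simp only [Finset.sum_smul]
  rw [Finset.sum_comm]
  refine Finset.sum_congr rfl fun i _ => ?_
  conv_lhs => rw [← (b i).sum_repr (v i), Finset.sum_mul]
  exact Finset.sum_congr rfl fun j _ => by rw [smul_mul_assoc, hmul, smul_smul]; rfl

variable [AddCommGroup ι] [DecidableEq ι]

-- Multiplication by `g i` sends the basis `b i` to multiples of the family `e`, so a syzygy can be
-- tested one coordinate `e j` at a time.
theorem mem_gradedSyz_iff_coordEquiv_mem [CommRing k] [Algebra k A] [Algebra k R]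
    {ℬ : ι → Submodule k A} [GradedAlgebra ℬ] {𝒜 : ι → Submodule k R} [GradedAlgebra 𝒜]
    (hℬ : ∀ m, ∀ a ∈ ℬ m, algebraMap A R a ∈ 𝒜 m)
    {e : κ → R} (he : LinearIndependent A e) {θ : κ → ι}
    (b : Fin n → Module.Basis κ A R) {ε : Fin n → κ → ι} (hb : ∀ i j, b i j ∈ 𝒜 (ε i j))
    {g : Fin n → R} {δ : Fin n → ι} {c : κ → Fin n → A} {δ' : κ → Fin n → ι}
    (hmul : ∀ i j, b i j * g i = c j i • e j) (hdeg : ∀ i j, ε i j + δ i = θ j + δ' j i)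
    {v : Fin n → R} {m : ι} :
    v ∈ gradedSyz 𝒜 g δ m ↔ ∀ j, coordEquiv b v j ∈ gradedSyz ℬ (c j) (δ' j) (m - θ j) := by
  have relation_iff :
      ∑ i, v i * g i = 0 ↔ ∀ j, ∑ i, coordEquiv b v j i * c j i = 0 := by
    rw [sum_mul_eq_sum_coordEquiv_smul b hmul]
    exact ⟨Fintype.linearIndependent_iff.1 he _, fun h => by simp [h]⟩
  have degree_iff :
      (∀ i, v i ∈ 𝒜 (m - δ i)) ↔ ∀ j i, coordEquiv b v j i ∈ ℬ (m - θ j - δ' j i) := by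
    rw [forall_comm]
    refine forall_congr' fun i => (mem_grading_iff_repr_mem hℬ (b i) (hb i)).trans ?_
    refine forall_congr' fun j => ?_
    rw [sub_sub, add_comm, hdeg, ← sub_sub]
    rfl
  simp only [mem_gradedSyz, relation_iff, degree_iff, forall_and]

theorem finrank_gradedSyz_eq_sum [Field k] [Algebra k A] [Algebra k R] [IsScalarTower k A R]
    {ℬ : ι → Submodule k A} [GradedAlgebra ℬ] [∀ m, Module.Finite k (ℬ m)]
    {𝒜 : ι → Submodule k R} [GradedAlgebra 𝒜]
    (hℬ : ∀ m, ∀ a ∈ ℬ m, algebraMap A R a ∈ 𝒜 m)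
    {e : κ → R} (he : LinearIndependent A e) {θ : κ → ι}
    (b : Fin n → Module.Basis κ A R) {ε : Fin n → κ → ι} (hb : ∀ i j, b i j ∈ 𝒜 (ε i j))
    {g : Fin n → R} {δ : Fin n → ι} {c : κ → Fin n → A} {δ' : κ → Fin n → ι}
    (hmul : ∀ i j, b i j * g i = c j i • e j) (hdeg : ∀ i j, ε i j + δ i = θ j + δ' j i)
    (m : ι) :
    Module.finrank k (gradedSyz 𝒜 g δ m) =
      ∑ j, Module.finrank k (gradedSyz ℬ (c j) (δ' j) (m - θ j)) := by
  let T j := gradedSyz ℬ (c j) (δ' j) (m - θ j)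
  let E : (Fin n → R) ≃ₗ[k] (κ → Fin n → A) := (coordEquiv b).restrictScalars k
  have comap_eq : gradedSyz 𝒜 g δ m = (Submodule.pi Set.univ T).comap E.toLinearMap := by
    ext v
    simpa [Submodule.mem_pi] using! mem_gradedSyz_iff_coordEquiv_mem hℬ he b hb hmul hdeg
  rw [comap_eq, (E.ofSubmodule' _).finrank_eq, (submodulePiEquiv T).finrank_eq,
    Module.finrank_pi_fintype]

end Decomposition

section ShiftSum

variable {ι M : Type*} [AddCommGroup ι] [AddCommMonoid M]

/-- The coefficients of `(1 + t^α + ⋯ + t^((s - 1)α)) · ∑ₘ P(m) t^m`. -/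
def shiftSum (α : ι) (s : ℕ) (P : ι → M) (m : ι) : M :=
  ∑ j ∈ Finset.range s, P (m - j • α)

theorem shiftSum_add (α : ι) (s t : ℕ) (P : ι → M) (m : ι) :
    shiftSum α (s + t) P m = shiftSum α s P m + shiftSum α t P (m - s • α) := by
  simp only [shiftSum, Finset.sum_range_add, add_smul, sub_sub]

theorem sum_fin_ite_eq_shiftSum_add (α : ι) {r d : ℕ} (hrd : r ≤ d) (P Q : ι → M)
    (m : ι) :
    ∑ j : Fin d, (if (j : ℕ) < r then Q else P) (m - (j : ℕ) • α) =
      shiftSum α r Q m + shiftSum α (d - r) P (m - r • α) := by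
  obtain ⟨s, rfl⟩ := Nat.exists_eq_add_of_le hrd
  rw [Fin.sum_univ_eq_sum_range (fun j => (if j < r then Q else P) (m - j • α)),
    Finset.sum_range_add, Nat.add_sub_cancel_left]
  congr 1
  · exact Finset.sum_congr rfl fun j hj => by rw [if_pos (Finset.mem_range.1 hj)]
  · refine Finset.sum_congr rfl fun j _ => ?_
    rw [if_neg (Nat.not_lt.2 (Nat.le_add_right r j)), add_smul, sub_sub]

-- With `G s = (1 - t^(sα)) / (1 - t^α)`, this is
-- `(1 - t^(dα)) (G r · Q + t^(rα) G (d - r) · P)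
--   = (t^(rα) - t^(dα)) G d · P + (1 - t^(rα)) G d · Q`, with the negative terms moved across.
theorem shiftSum_recursion (α : ι) {r d : ℕ} (hrd : r ≤ d) (P Q : ι → M) (m : ι) :
    let H m := shiftSum α r Q m + shiftSum α (d - r) P (m - r • α)
    H m + shiftSum α d P (m - d • α) + shiftSum α d Q (m - r • α) =
      H (m - d • α) + shiftSum α d P (m - r • α) + shiftSum α d Q m := by
  intro H
  obtain ⟨s, rfl⟩ := Nat.exists_eq_add_of_le hrd
  have shift_r_s : m - r • α - s • α = m - (r + s) • α := by rw [sub_sub, add_smul]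
  have P_low : shiftSum α (r + s) P (m - (r + s) • α) =
      shiftSum α r P (m - (r + s) • α) + shiftSum α s P (m - (r + s) • α - r • α) :=
    shiftSum_add α r s P _
  have P_high : shiftSum α (r + s) P (m - r • α) =
      shiftSum α s P (m - r • α) + shiftSum α r P (m - (r + s) • α) := by
    rw [add_comm r s, shiftSum_add, add_comm s r, shift_r_s]
  have Q_low : shiftSum α (r + s) Q (m - r • α) =
      shiftSum α s Q (m - r • α) + shiftSum α r Q (m - (r + s) • α) := by
    rw [add_comm r s, shiftSum_add, add_comm s r, shift_r_s]
  have Q_high : shiftSum α (r + s) Q m = shiftSum α r Q m + shiftSum α s Q (m - r • α) :=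
    shiftSum_add α r s Q m
  simp only [H, Nat.add_sub_cancel_left, P_low, P_high, Q_low, Q_high]
  abel

end ShiftSum

section PowerBasis

theorem val_sub_add_mul_add {d r : ℕ} (hr : r < d) (q : ℕ) (j : Fin d) :
    ((j - ⟨r, hr⟩ : Fin d) : ℕ) + (d * q + r) = j + d * if (j : ℕ) < r then q + 1 else q := by
  split_ifs with hj
  · rw [Fin.coe_sub_iff_lt.2 (Fin.lt_def.2 hj)]
    dsimp only
    lia
  · rw [Fin.coe_sub_iff_le.2 (Fin.le_def.2 (not_lt.1 hj))]
    dsimp only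
    lia

/-- The Hilbert function of the syzygy module of `(x ^ l, g 0, …, g (n - 1))`, for `x` of degree
`α` and `g i` of degree `δ i`. -/
noncomputable def syzPowRank {k R ι : Type*} [CommRing k] [CommRing R] [Algebra k R]
    [AddCommGroup ι] {n : ℕ} (𝒜 : ι → Submodule k R) (x : R) (α : ι) (g : Fin n → R)
    (δ : Fin n → ι) (l : ℕ) (m : ι) : ℕ :=
  Module.finrank k (gradedSyz 𝒜 (Matrix.vecCons (x ^ l) g) (Matrix.vecCons (l • α) δ) m)

theorem syzPowRank_fin_two {k R ι : Type*} [CommRing k] [CommRing R] [Algebra k R]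
    [AddCommGroup ι] (𝒜 : ι → Submodule k R) (x : R) (α : ι) (g₀ g₁ : R) (δ₀ δ₁ : ι) (l : ℕ)
    (m : ι) :
    syzPowRank 𝒜 x α ![g₀, g₁] ![δ₀, δ₁] l m =
      Module.finrank k ↥((LinearMap.ker (syzMap ![x ^ l, g₀, g₁])).restrictScalars k ⊓
        Submodule.pi Set.univ ![𝒜 (m - l • α), 𝒜 (m - δ₀), 𝒜 (m - δ₁)]) := by
  rw [syzPowRank, gradedSyz_fin_three]

variable {k A R ι : Type*} [Field k] [CommRing A] [CommRing R] [Algebra k A] [Algebra k R]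
  [Algebra A R] [IsScalarTower k A R] [AddCommGroup ι] [DecidableEq ι]
  {ℬ : ι → Submodule k A} [GradedAlgebra ℬ] [∀ m, Module.Finite k (ℬ m)]
  {𝒜 : ι → Submodule k R} [GradedAlgebra 𝒜]
  {pb : PowerBasis A R} {α : ι} {f : A} {n : ℕ} {g : Fin n → A} {δ : Fin n → ι}

-- The first component of a syzygy is expanded in the permuted basis `x ^ σ j`, which
-- multiplication by `x ^ l` sends to the multiples `f ^ e j * x ^ j` of the original one.
theorem syzPowRank_eq_sum (hℬ : ∀ m, ∀ a ∈ ℬ m, algebraMap A R a ∈ 𝒜 m) (hgen : pb.gen ∈ 𝒜 α)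
    (hpow : pb.gen ^ pb.dim = algebraMap A R f) {l : ℕ} (σ : Equiv.Perm (Fin pb.dim))
    {e : Fin pb.dim → ℕ} (hσ : ∀ j, (σ j : ℕ) + l = j + pb.dim * e j) (m : ι) :
    syzPowRank 𝒜 pb.gen α (algebraMap A R ∘ g) δ l m =
      ∑ j : Fin pb.dim, syzPowRank ℬ f (pb.dim • α) g δ (e j) (m - (j : ℕ) • α) := by
  let b : Fin (n + 1) → Module.Basis (Fin pb.dim) A R :=
    Matrix.vecCons (pb.basis.reindex σ.symm) fun _ => pb.basis
  let ε : Fin (n + 1) → Fin pb.dim → ι :=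
    Matrix.vecCons (fun j => (σ j : ℕ) • α) fun _ j => (j : ℕ) • α
  have basis_homogeneous (i j) : b i j ∈ 𝒜 (ε i j) := by
    cases i using Fin.cases <;> simpa [b, ε] using SetLike.pow_mem_graded _ hgen
  have basis_mul_generator (i j) : b i j * Matrix.vecCons (pb.gen ^ l) (algebraMap A R ∘ g) i =
      Matrix.vecCons (f ^ e j) g i • pb.basis j := by
    cases i using Fin.cases with
    | zero =>
      have : pb.gen ^ (σ j : ℕ) * pb.gen ^ l = algebraMap A R f ^ e j * pb.gen ^ (j : ℕ) := by
        rw [← pow_add, hσ, pow_add, pow_mul, hpow, mul_comm]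
      simpa [b, Algebra.smul_def] using this
    | succ i => simp [b, Algebra.smul_def, mul_comm]
  have degree_eq (i j) : ε i j + Matrix.vecCons (l • α) δ i =
      (j : ℕ) • α + Matrix.vecCons (e j • pb.dim • α) δ i := by
    cases i using Fin.cases with
    | zero => simp [ε, ← add_smul, hσ, smul_smul, mul_comm (e j)]
    | succ i => simp [ε]
  exact finrank_gradedSyz_eq_sum hℬ pb.basis.linearIndependent b basis_homogeneous
    basis_mul_generator degree_eq m

theorem syzPowRank_mul (hℬ : ∀ m, ∀ a ∈ ℬ m, algebraMap A R a ∈ 𝒜 m) (hgen : pb.gen ∈ 𝒜 α)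
    (hpow : pb.gen ^ pb.dim = algebraMap A R f) (q : ℕ) (m : ι) :
    syzPowRank 𝒜 pb.gen α (algebraMap A R ∘ g) δ (pb.dim * q) m =
      shiftSum α pb.dim (syzPowRank ℬ f (pb.dim • α) g δ q) m := by
  rw [syzPowRank_eq_sum hℬ hgen hpow 1 (e := fun _ => q) fun _ => rfl, shiftSum,
    Finset.sum_range]

theorem syzPowRank_mul_add (hℬ : ∀ m, ∀ a ∈ ℬ m, algebraMap A R a ∈ 𝒜 m) (hgen : pb.gen ∈ 𝒜 α)
    (hpow : pb.gen ^ pb.dim = algebraMap A R f) {r : ℕ} (hr : r < pb.dim) (q : ℕ) (m : ι) :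
    syzPowRank 𝒜 pb.gen α (algebraMap A R ∘ g) δ (pb.dim * q + r) m =
      shiftSum α r (syzPowRank ℬ f (pb.dim • α) g δ (q + 1)) m +
        shiftSum α (pb.dim - r) (syzPowRank ℬ f (pb.dim • α) g δ q) (m - r • α) := by
  have : NeZero pb.dim := ⟨hr.ne_bot⟩
  rw [syzPowRank_eq_sum hℬ hgen hpow (Equiv.subRight ⟨r, hr⟩) (val_sub_add_mul_add hr q),
    ← sum_fin_ite_eq_shiftSum_add α hr.le]
  exact Finset.sum_congr rfl fun j _ => by split_ifs <;> rfl

theorem syzPowRank_recursion (hℬ : ∀ m, ∀ a ∈ ℬ m, algebraMap A R a ∈ 𝒜 m) (hgen : pb.gen ∈ 𝒜 α)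
    (hpow : pb.gen ^ pb.dim = algebraMap A R f) (g : Fin n → A) (δ : Fin n → ι)
    {r : ℕ} (hr : r < pb.dim) (q : ℕ) (m : ι) :
    let h := syzPowRank 𝒜 pb.gen α (algebraMap A R ∘ g) δ
    h (pb.dim * q + r) m + h (pb.dim * q) (m - pb.dim • α) + h (pb.dim * (q + 1)) (m - r • α) =
      h (pb.dim * q + r) (m - pb.dim • α) + h (pb.dim * q) (m - r • α) +
        h (pb.dim * (q + 1)) m := by
  simp only [syzPowRank_mul_add hℬ hgen hpow hr, syzPowRank_mul hℬ hgen hpow]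
  exact shiftSum_recursion α hr.le _ _ m

end PowerBasis

section WeightedPolynomials

variable {k σ : Type*}

theorem finite_weightedHomogeneousSubmodule_of_pos [CommRing k] [Finite σ] {w : σ → ℤ}
    (hw : ∀ i, 0 < w i) (m : ℤ) : Module.Finite k (weightedHomogeneousSubmodule k w m) := by
  lift w to σ → ℕ using fun i => (hw i).le
  simp only [Int.natCast_pos] at hw
  have weight_cast (e : σ →₀ ℕ) : Finsupp.weight (fun i => (w i : ℤ)) e = Finsupp.weight w e := by
    simp [Finsupp.weight_apply, Finsupp.sum]
  have finite_monomials : {e : σ →₀ ℕ | Finsupp.weight (fun i => (w i : ℤ)) e = m}.Finite := by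
    refine (Finsupp.finite_of_nat_weight_eq w (fun i => (hw i).ne') m.toNat).subset fun e he => ?_
    simp only [Set.mem_ofPred_eq, weight_cast] at he ⊢
    lia
  have := finite_monomials.to_subtype
  rw [weightedHomogeneousSubmodule_eq_finsupp_supported]
  exact Module.Finite.of_basis (basisRestrictSupport k _)

theorem map_mem_of_isWeightedHomogeneous {ι R : Type*} [CommRing k] [CommRing R] [Algebra k R]
    [AddCommMonoid ι] {𝒜 : ι → Submodule k R} [SetLike.GradedMonoid 𝒜] {w : σ → ι}
    (φ : MvPolynomial σ k →ₐ[k] R) (hφ : ∀ i, φ (X i) ∈ 𝒜 (w i)) {p : MvPolynomial σ k} {m : ι}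
    (hp : p.IsWeightedHomogeneous w m) : φ p ∈ 𝒜 m := by
  rw [p.as_sum, map_sum]
  refine sum_mem fun e he => ?_
  rw [← hp (mem_support_iff.1 he), monomial_eq, ← smul_eq_C_mul, map_smul, Finsupp.prod, map_prod,
    Finsupp.weight_apply, Finsupp.sum]
  simp only [map_pow]
  exact Submodule.smul_mem _ _ (SetLike.prod_pow_mem_graded 𝒜 w _ e fun i _ => hφ i)

end WeightedPolynomials

section Hypersurface

variable {k : Type*} [CommRing k] {n : ℕ}

theorem finSuccEquiv_rename_succ (p : MvPolynomial (Fin n) k) :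
    finSuccEquiv k n (rename Fin.succ p) = Polynomial.C p := by
  have : ((finSuccEquiv k n : _ →ₐ[k] _).comp (rename Fin.succ)) =
      IsScalarTower.toAlgHom k (MvPolynomial (Fin n) k) (Polynomial (MvPolynomial (Fin n) k)) := by
    ext i : 1
    simp [finSuccEquiv_X_succ]
  exact DFunLike.congr_fun this p

/-- The `k[X₁,…,Xₙ]`-algebra structure on `k[X₀,…,Xₙ] / I`, with the variables of the smaller ring
shifted by `Fin.succ`. It is activated only locally. -/
noncomputable abbrev quotientTailAlgebra (I : Ideal (MvPolynomial (Fin (n + 1)) k)) :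
    Algebra (MvPolynomial (Fin n) k) (MvPolynomial (Fin (n + 1)) k ⧸ I) :=
  ((Ideal.Quotient.mkₐ k I).comp (rename Fin.succ)).toAlgebra

attribute [local instance] quotientTailAlgebra

/-- The polynomials in `X₀` over `k[X₁,…,Xₙ]` map onto `k[X₀,…,Xₙ] / (X₀ᵈ - f)`, presenting it as
the extension of `k[X₁,…,Xₙ]` by a `d`-th root of `f`. -/
noncomputable def isAdjoinRootMonicQuotient {d : ℕ} (hd : d ≠ 0) (f : MvPolynomial (Fin n) k) :
    IsAdjoinRootMonic (MvPolynomial (Fin (n + 1)) k ⧸ Ideal.span {X 0 ^ d - rename Fin.succ f})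
      (Polynomial.X ^ d - Polynomial.C f) where
  map :=
    { (Ideal.Quotient.mk (Ideal.span {X 0 ^ d - rename Fin.succ f})).comp
        ((finSuccEquiv k n).symm : _ →+* MvPolynomial (Fin (n + 1)) k) with
      commutes' p := by
        change Ideal.Quotient.mk _ ((finSuccEquiv k n).symm (Polynomial.C p)) = _
        rw [← finSuccEquiv_rename_succ, AlgEquiv.symm_apply_apply]
        rfl }
  map_surjective := Ideal.Quotient.mk_surjective.comp (finSuccEquiv k n).symm.surjective
  ker_map := by
    ext p
    have equation_eq :
        finSuccEquiv k n (X 0 ^ d - rename Fin.succ f) = Polynomial.X ^ d - Polynomial.C f := by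
      simp [finSuccEquiv_rename_succ, finSuccEquiv_X_zero]
    change Ideal.Quotient.mk _ ((finSuccEquiv k n).symm p) = 0 ↔ _
    rw [Ideal.Quotient.eq_zero_iff_mem, Ideal.mem_span_singleton, Ideal.mem_span_singleton,
      ← equation_eq]
    exact (map_dvd_iff_dvd_symm (finSuccEquiv k n)).symm
  monic := Polynomial.monic_X_pow_sub_C f hd

theorem root_isAdjoinRootMonicQuotient {d : ℕ} (hd : d ≠ 0) (f : MvPolynomial (Fin n) k) :
    (isAdjoinRootMonicQuotient hd f).root = Ideal.Quotient.mk _ (X 0) := by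
  change Ideal.Quotient.mk _ ((finSuccEquiv k n).symm Polynomial.X) = _
  rw [← finSuccEquiv_X_zero, AlgEquiv.symm_apply_apply]

theorem isScalarTower_quotientTail (I : Ideal (MvPolynomial (Fin (n + 1)) k)) :
    IsScalarTower k (MvPolynomial (Fin n) k) (MvPolynomial (Fin (n + 1)) k ⧸ I) :=
  .of_algHom ((Ideal.Quotient.mkₐ k I).comp (rename Fin.succ))

theorem algebraMap_quotient_X (I : Ideal (MvPolynomial (Fin (n + 1)) k)) (i : Fin n) :
    algebraMap (MvPolynomial (Fin n) k) (_ ⧸ I) (X i) = Ideal.Quotient.mk I (X i.succ) :=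
  congrArg (Ideal.Quotient.mk I) (rename_X _ _)

theorem exists_powerBasis_quotient [Nontrivial k] {d : ℕ} (hd : d ≠ 0)
    (f : MvPolynomial (Fin n) k) :
    ∃ pb : PowerBasis (MvPolynomial (Fin n) k)
        (MvPolynomial (Fin (n + 1)) k ⧸ Ideal.span {X 0 ^ d - rename Fin.succ f}),
      pb.dim = d ∧ pb.gen = Ideal.Quotient.mk _ (X 0) ∧
        pb.gen ^ pb.dim = algebraMap (MvPolynomial (Fin n) k) _ f := by
  let h := isAdjoinRootMonicQuotient hd f
  have dim_eq : h.powerBasis.dim = d := Polynomial.natDegree_X_pow_sub_C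
  have root_pow : h.root ^ d = algebraMap _ _ f := sub_eq_zero.1 <| by
    simpa only [map_sub, map_pow, Polynomial.aeval_X, Polynomial.aeval_C] using h.aeval_root_self
  exact ⟨h.powerBasis, dim_eq, root_isAdjoinRootMonicQuotient hd f, dim_eq.symm ▸ root_pow⟩

end Hypersurface

theorem stmt_14_general {k : Type*} [Field k] {n d r : ℕ} (hr : r < d) (f : MvPolynomial (Fin n) k)
    {𝒜 : ℤ → Submodule k
      (MvPolynomial (Fin (n + 1)) k ⧸ Ideal.span {X 0 ^ d - rename Fin.succ f})}
    [GradedAlgebra 𝒜] {α : ℤ} (hX₀ : Ideal.Quotient.mk _ (X 0) ∈ 𝒜 α)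
    {w : Fin n → ℤ} (hw : ∀ i, 0 < w i) (hX : ∀ i, Ideal.Quotient.mk _ (X i.succ) ∈ 𝒜 (w i))
    {s : ℕ} (g : Fin s → MvPolynomial (Fin n) k) (δ : Fin s → ℤ) (q : ℕ) (m : ℤ) :
    let h := syzPowRank 𝒜 (Ideal.Quotient.mk _ (X 0)) α
      (Ideal.Quotient.mk _ ∘ rename Fin.succ ∘ g) δ
    h (d * q + r) m + h (d * q) (m - d * α) + h (d * (q + 1)) (m - r * α) =
      h (d * q + r) (m - d * α) + h (d * q) (m - r * α) + h (d * (q + 1)) m := by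
  let I : Ideal (MvPolynomial (Fin (n + 1)) k) := Ideal.span {X 0 ^ d - rename Fin.succ f}
  let := weightedGradedAlgebra k w
  let := quotientTailAlgebra I
  have := isScalarTower_quotientTail I
  have := finite_weightedHomogeneousSubmodule_of_pos (k := k) hw
  obtain ⟨pb, dim_eq, gen_eq, gen_pow⟩ := exists_powerBasis_quotient hr.ne_bot f
  have algebraMap_mem (m) (p) (hp : p ∈ weightedHomogeneousSubmodule k w m) :
      algebraMap (MvPolynomial (Fin n) k) _ p ∈ 𝒜 m :=
    map_mem_of_isWeightedHomogeneous (IsScalarTower.toAlgHom k _ _)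
      (fun i => by simpa [algebraMap_quotient_X] using hX i) hp
  rw [← dim_eq] at hr
  have := syzPowRank_recursion algebraMap_mem (gen_eq ▸ hX₀) gen_pow g δ hr q m
  simp only [dim_eq, gen_eq, nsmul_eq_mul] at this
  exact this

/-- For `R = k[X,Y,Z]/(X^d - F(Y,Z))`, graded with
`deg X = α, deg Y = β, deg Z = γ` and `F ∈ k[Y,Z]` homogeneous of degree `dα`,
and `a = dq + r` with `0 ≤ r ≤ d - 1`, the Hilbert series of the syzygy
modules `S(l) = Syz_R(X^l, Y^b, Z^c)` satisfy
`(1 - t^{αd})·H_{S(a)} = (t^{αr} - t^{αd})·H_{S(a-r)} + (1 - t^{αr})·H_{S(a+d-r)}`;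
this is stated coefficientwise in terms of the dimensions
`h l m = dim_k S(l)_m` of the graded pieces (whose degree-`m` elements have
components in `𝒜 (m - αl)`, `𝒜 (m - βb)`, `𝒜 (m - γc)`), with
`a - r = dq` and `a + d - r = d(q+1)`. -/
theorem stmt_14 {k : Type*} [Field k] (d q r α β γ b c : ℕ) (hd : 1 ≤ d)
    (hα : 1 ≤ α) (hβ : 1 ≤ β) (hγ : 1 ≤ γ) (hr : r < d) (hb : 1 ≤ b) (hc : 1 ≤ c)
    (F : MvPolynomial (Fin 3) k) (hFsupp : F ∈ MvPolynomial.supported k {1, 2})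
    (hFhom : F.IsWeightedHomogeneous ![α, β, γ] (d * α))
    (𝒜 : ℤ → Submodule k
      (MvPolynomial (Fin 3) k ⧸ Ideal.span {MvPolynomial.X 0 ^ d - F}))
    [GradedAlgebra 𝒜]
    (hX : Ideal.Quotient.mk _ (MvPolynomial.X 0) ∈ 𝒜 (α : ℤ))
    (hY : Ideal.Quotient.mk _ (MvPolynomial.X 1) ∈ 𝒜 (β : ℤ))
    (hZ : Ideal.Quotient.mk _ (MvPolynomial.X 2) ∈ 𝒜 (γ : ℤ)) :
    let R := MvPolynomial (Fin 3) k ⧸ Ideal.span {MvPolynomial.X 0 ^ d - F}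
    let x : R := Ideal.Quotient.mk _ (MvPolynomial.X 0)
    let y : R := Ideal.Quotient.mk _ (MvPolynomial.X 1)
    let z : R := Ideal.Quotient.mk _ (MvPolynomial.X 2)
    -- `h l m` is the `k`-dimension of the degree-`m` piece of `Syz_R(X^l,Y^b,Z^c)`
    let h : ℕ → ℤ → ℕ := fun l m => Module.finrank k
      ↥(Submodule.restrictScalars k (LinearMap.ker (syzMap ![x ^ l, y ^ b, z ^ c]))
        ⊓ Submodule.pi Set.univ ![𝒜 (m - α * l), 𝒜 (m - β * b), 𝒜 (m - γ * c)])
    ∀ m : ℤ,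
      h (d * q + r) m + h (d * q) (m - α * d) + h (d * (q + 1)) (m - α * r)
        = h (d * q + r) (m - α * d) + h (d * q) (m - α * r)
          + h (d * (q + 1)) m := by
  intro R x y z h m
  obtain ⟨f, rfl⟩ := exists_rename_eq_of_vars_subset_range F (Fin.succ : Fin 2 → Fin 3)
    (Fin.succ_injective 2) <| (mem_supported.1 hFsupp).trans <| by
      rintro i (rfl | rfl)
      exacts [⟨0, rfl⟩, ⟨1, rfl⟩]
  have h_eq (l m) : h l m = syzPowRank 𝒜 x α ![y ^ b, z ^ c] ![(β * b : ℤ), γ * c] l m := by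
    rw [syzPowRank_fin_two, nsmul_eq_mul, mul_comm (l : ℤ)]
  have generators :
      Ideal.Quotient.mk _ ∘ rename Fin.succ ∘ ![X (0 : Fin 2) ^ b, X 1 ^ c] = ![y ^ b, z ^ c] := by
    funext i
    fin_cases i <;> simp [y, z]
  have recursion := stmt_14_general hr f hX (w := ![(β : ℤ), (γ : ℤ)])
    (by simpa [Fin.forall_fin_two] using ⟨hβ, hγ⟩) (by simpa [Fin.forall_fin_two] using ⟨hY, hZ⟩)
    ![X 0 ^ b, X 1 ^ c] ![(β * b : ℤ), (γ * c : ℤ)] q m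
  rw [generators] at recursion
  simpa only [h_eq, mul_comm (α : ℤ)] using recursion
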